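/- Fix integers n, m, k, r ≥ 1 and degrees 1 ≤ l_μ ≤ n for μ = 1,…,r. For each μ let Ψ_μ be a differential l_μ-form on J^k(n,m) = ℝ^N of the coordinate shape Ψ_μ = Σ A^{(μ), I^{α_1}_1…I^{α_t}_{λ_t}}_{i_1…i_{λ_0}} dx_{i_1}∧…∧dx_{i_{λ_0}}∧dp^{α_1}_{I^{α_1}_1}∧…∧dp^{α_t}_{I^{α_t}_{λ_t}} (summed over 0 ≤ t ≤ m, λ_0 + λ_1 + … + λ_t = l_μ, α_1<…<α_t, increasing index tuples i's and I's with I's in S_k) with smooth coefficients. Then for smooth z^1,…,z^m : ℝ^n → ℝ, the pullbacks (j^k z)*Ψ_μ vanish identically for all μ = 1,…,r if and only if (z^1,…,z^m) is a solution of the system of generalized Monge–Ampère equations: for every μ = 1,…,r, every 1 ≤ ν_1 < … < ν_{l_μ} ≤ n and every x ∈ ℝ^n, Σ_{t=1}^{m} Σ_{λ_0=0}^{l_μ} Σ_{λ_1+…+λ_t=l_μ−λ_0} Σ_{α_1<…<α_t} Σ (over all splittings {ν_1,…,ν_{l_μ}} = {i_1<…<i_{λ_0}} ⊔ {j^{α_1}_1<…<j^{α_t}_{λ_t}})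 Σ (over increasing tuples of the I's) A^{(μ), I^{α_1}_1…I^{α_t}_{λ_t}}_{i_1…i_{λ_0}}(j^k z(x)) · Δ^{I^{α_1}_1…I^{α_t}_{λ_t}}_{j^{α_1}_1…j^{α_t}_{λ_t}}(ν_1,…,ν_{l_μ}; z^{α_1},…,z^{α_t})(x) = 0. -/

import Mathlib

/-! The pullback of `Ψ` at `x` is an alternating form on `ℝⁿ`, so it vanishes iff it vanishes on
every `(e_{ν_1},…,e_{ν_l})` with `ν_1 < … < ν_l` (`alternating_eq_zero_of_strictMono`). Its value
there is exactly the left-hand side of the Monge–Ampère equation indexed by `ν`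
(`pullback_PsiM_basis`).

Indeed, along the jet section `dx_i(e_j) = δ_{ij}` and `dp^α_I(e_j) = ∂_I ∂_{x_j} z^α`, the latter
by symmetry of second derivatives. A monomial `dx_{i_1}∧…∧dp^{α_t}_{I}` therefore evaluates to a
determinant. It is zero if some `i` is not one of the `ν`'s, since the corresponding column vanishes.
Otherwise, permuting `(ν_1,…,ν_l)` into `(i_1,…,i_{λ₀}, j_1,…)` contributes the sign of the
splitting and leaves a block triangular matrix with an identity block and the matrix of `H` on its
diagonal (`det_split`). -/

noncomputable section
namespace GMAE

/-- first-order partial derivative in the direction `x_i` -/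
noncomputable def pd {n : ℕ} (i : Fin n) (f : (Fin n → ℝ) → ℝ) : (Fin n → ℝ) → ℝ :=
  fun x => fderiv ℝ f x (Pi.single i 1)

/-- iterated partial derivative along a list of coordinate directions -/
noncomputable def pdList {n : ℕ} : List (Fin n) → ((Fin n → ℝ) → ℝ) → ((Fin n → ℝ) → ℝ)
  | [], f => f
  | i :: L, f => pdList L (pd i f)

/-- iterated partial derivative `∂_I` along a multiset of directions -/
noncomputable def pdM {n : ℕ} (I : Multiset (Fin n)) (f : (Fin n → ℝ) → ℝ) : (Fin n → ℝ) → ℝ :=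
  pdList I.toList f

/-- `Σ_k`: symmetric multi-indices of length `1,…,k`; the component `j` consists of
the multi-indices of length `k - j`. -/
abbrev SigIdx (n k : ℕ) := Σ j : Fin k, Sym (Fin n) (k - j.val)

/-- the inclusion of `S_k` (multi-indices of length exactly `k`) into `Σ_k` -/
def topIdx {n k : ℕ} (hk : 0 < k) (I : Sym (Fin n) k) : SigIdx n k := ⟨⟨0, hk⟩, I⟩

/-- the underlying multiset of a multi-index in `Σ_k` -/
def SigIdx.toMultiset {n k : ℕ} (p : SigIdx n k) : Multiset (Fin n) := ↑p.2

/-- index set for the coordinates `(x_i, z^α, p^α_I)` of the jet space `J^k(n,m)` -/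
abbrev JIdx (n m k : ℕ) := Fin n ⊕ Fin m ⊕ (Fin m × SigIdx n k)

/-- the `k`-jet space `J^k(n,m) = ℝ^N`, `N = n + m + m⬝|Σ_k|` -/
abbrev Jet (n m k : ℕ) := JIdx n m k → ℝ

/-- the coordinate `1`-form `dx_i` -/
def dxF {n m k : ℕ} (i : Fin n) : Jet n m k →ₗ[ℝ] ℝ := LinearMap.proj (Sum.inl i)
/-- the coordinate `1`-form `dz^α` -/
def dzF {n m k : ℕ} (α : Fin m) : Jet n m k →ₗ[ℝ] ℝ := LinearMap.proj (Sum.inr (Sum.inl α))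
/-- the coordinate `1`-form `dp^α_I` -/
def dpF {n m k : ℕ} (α : Fin m) (I : SigIdx n k) : Jet n m k →ₗ[ℝ] ℝ :=
  LinearMap.proj (Sum.inr (Sum.inr (α, I)))

/-- the `k`-jet section of `z = (z^1,…,z^m)` -/
noncomputable def jetSec {n m k : ℕ} (z : Fin m → (Fin n → ℝ) → ℝ) (x : Fin n → ℝ) :
    Jet n m k :=
  Sum.elim x (Sum.elim (fun α => z α x) fun p => pdM (SigIdx.toMultiset p.2) (z p.1) x)

/-- the singleton multi-index `(i)` as an element of `Σ_k` -/
def singIdx {n k : ℕ} (hk : 0 < k) (i : Fin n) : SigIdx n k :=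
  ⟨⟨k - 1, by omega⟩, Sym.cast (show 1 = k - (k-1) by omega) (Sym.replicate 1 i)⟩

/-- `Ii`: the multi-index `I ∈ Σ_{k-1} ⊆ Σ_k` with `i` added, an element of `Σ_k` -/
def consIdx {n k : ℕ} (p : SigIdx n k) (hp : 1 ≤ p.1.val) (i : Fin n) : SigIdx n k :=
  ⟨⟨p.1.val - 1, by omega⟩,
    Sym.cast (show (k - p.1.val) + 1 = k - (p.1.val - 1) by omega) (i ::ₛ p.2)⟩

/-- the contact `1`-form `ω^α_0 = dz^α - Σ_i p^α_i dx_i` at the point `u` -/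
noncomputable def contact0 {n m k : ℕ} (hk : 0 < k) (α : Fin m) (u : Jet n m k) :
    Jet n m k →ₗ[ℝ] ℝ :=
  dzF α - ∑ i, u (Sum.inr (Sum.inr (α, singIdx hk i))) • dxF i

/-- the contact `1`-form `ω^α_I = dp^α_I - Σ_i p^α_{Ii} dx_i`, for `I ∈ Σ_{k-1}`,
at the point `u` -/
noncomputable def contactP {n m k : ℕ} (α : Fin m) (p : SigIdx n k) (hp : 1 ≤ p.1.val)
    (u : Jet n m k) : Jet n m k →ₗ[ℝ] ℝ :=
  dpF α p - ∑ i, u (Sum.inr (Sum.inr (α, consIdx p hp i))) • dxF i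

/-- the wedge product `θ_1 ∧ ⋯ ∧ θ_l` of `1`-forms, `(w_1,…,w_l) ↦ det (θ_a (w_b))` -/
noncomputable def wedge {E : Type*} [AddCommGroup E] [Module ℝ E] {l : ℕ}
    (θ : Fin l → (E →ₗ[ℝ] ℝ)) : E [⋀^Fin l]→ₗ[ℝ] ℝ :=
  Matrix.detRowAlternating.compLinearMap (LinearMap.pi θ)

/-- pullback of a differential `l`-form along a map `ι` -/
noncomputable def pullback {E F : Type*} [NormedAddCommGroup E] [NormedSpace ℝ E]
    [NormedAddCommGroup F] [NormedSpace ℝ F] {l : ℕ}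
    (ι : E → F) (Ψ : F → (F [⋀^Fin l]→ₗ[ℝ] ℝ)) (x : E) : E [⋀^Fin l]→ₗ[ℝ] ℝ :=
  (Ψ (ι x)).compLinearMap (fderiv ℝ ι x).toLinearMap

end GMAE

namespace GMAE

variable {n m k : ℕ} [LinearOrder (Sym (Fin n) k)]

/-- the ordered list of the `1`-forms
`dx_{i_1},…,dx_{i_{λ₀}}, dp^{α_1}_{I^{α_1}_1},…,dp^{α_t}_{I^{α_t}_{λ_t}}` of a monomial of
`Ψ`: the `i`'s are the elements of `s` in increasing order, and the `p`-factors are listed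
by increasing label `α` and, for each `α`, by the increasing enumeration of `T α ⊆ S_k`. -/
noncomputable def formListM (hk : 0 < k) (s : Finset (Fin n))
    (T : Fin m → Finset (Sym (Fin n) k)) : List (Jet n m k →ₗ[ℝ] ℝ) :=
  (s.sort (· ≤ ·)).map dxF ++
    (List.finRange m).flatMap fun α => ((T α).sort (· ≤ ·)).map fun I => dpF α (topIdx hk I)

/-- the `l`-form `Ψ = Σ A^{I^{α_1}_1…I^{α_t}_{λ_t}}_{i_1…i_{λ₀}}
dx_{i_1}∧⋯∧dx_{i_{λ₀}}∧dp^{α_1}_{I^{α_1}_1}∧⋯∧dp^{α_t}_{I^{α_t}_{λ_t}}`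
on `J^k(n,m)` with coefficients `A` -/
noncomputable def PsiM (hk : 0 < k)
    (A : Finset (Fin n) → (Fin m → Finset (Sym (Fin n) k)) → Jet n m k → ℝ) (l : ℕ)
    (u : Jet n m k) : (Jet n m k) [⋀^Fin l]→ₗ[ℝ] ℝ :=
  ∑ s : Finset (Fin n), ∑ T : Fin m → Finset (Sym (Fin n) k),
    if h : (formListM hk s T).length = l then
      A s T u • wedge (fun a => (formListM hk s T).get (Fin.cast h.symm a))
    else 0

/-- the list of column labels `(α_1, I^{α_1}_1), …, (α_t, I^{α_t}_{λ_t})` -/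
noncomputable def colListM (T : Fin m → Finset (Sym (Fin n) k)) :
    List (Fin m × Sym (Fin n) k) :=
  (List.finRange m).flatMap fun α => ((T α).sort (· ≤ ·)).map fun I => (α, I)

/-- the tuple `(i_1,…,i_{λ₀}, j_1,…,j_{l-λ₀})` obtained from the splitting
`{ν_1,…,ν_l} = {i_1<…<i_{λ₀}} ⊔ {j_1<…<j_{l-λ₀}}` determined by the subset `s`
(the `i`'s) of the image of `ν`. -/
noncomputable def splitTuple {l : ℕ} (ν : Fin l → Fin n) (s : Finset (Fin n))
    (a : Fin l) : Fin n :=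
  if h : a.val < s.card then s.orderIsoOfFin rfl ⟨a.val, h⟩
  else if h2 : a.val - s.card < ((Finset.image ν Finset.univ) \ s).card then
    ((Finset.image ν Finset.univ) \ s).orderIsoOfFin rfl ⟨a.val - s.card, h2⟩
  else ν a

/-- `sgn(σ)`, where `σ` is the permutation rearranging `(ν_1,…,ν_l)` into
`(i_1,…,i_{λ₀}, j_1,…,j_{l-λ₀})`: the determinant of the permutation matrix of `σ`. -/
noncomputable def splitSign {l : ℕ} (ν : Fin l → Fin n) (s : Finset (Fin n)) : ℝ :=
  Matrix.det (Matrix.of fun a b => if ν b = splitTuple ν s a then (1 : ℝ) else 0)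

/-- `Δ^{I^{α_1}_1…I^{α_t}_{λ_t}}_{j^{α_1}_1…j^{α_t}_{λ_t}}(ν_1,…,ν_l; z^{α_1},…,z^{α_t})
= sgn(σ)·H`, where `H` is the determinant of the matrix whose rows are indexed by the `j`'s
(the complement of `s` in the image of `ν`, in increasing order), whose columns are indexed
by the pairs `(α_c, I^{α_c}_d)` (in lexicographic order), with entry
`∂_{I^{α_c}_d} ∂_{x_j} z^{α_c}`. -/
noncomputable def DeltaM {l : ℕ} (z : Fin m → (Fin n → ℝ) → ℝ) (ν : Fin l → Fin n)
    (s : Finset (Fin n)) (T : Fin m → Finset (Sym (Fin n) k)) (x : Fin n → ℝ) : ℝ :=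
  splitSign ν s *
    Matrix.det (Matrix.of fun (r c : Fin (colListM T).length) =>
      if h : r.val < ((Finset.image ν Finset.univ) \ s).card then
        pdM ((((colListM T).get c).2 : Sym (Fin n) k) : Multiset (Fin n))
          (pd (((Finset.image ν Finset.univ) \ s).orderIsoOfFin rfl ⟨r.val, h⟩)
            (z ((colListM T).get c).1)) x
      else 0)

/-- the left-hand side of the generalized Monge–Ampère equation indexed by
`ν = (ν_1 < … < ν_l)`, evaluated at `x` -/
noncomputable def gmaeLHSM
    (A : Finset (Fin n) → (Fin m → Finset (Sym (Fin n) k)) → Jet n m k → ℝ) {l : ℕ}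
    (z : Fin m → (Fin n → ℝ) → ℝ) (ν : Fin l → Fin n) (x : Fin n → ℝ) : ℝ :=
  ∑ s ∈ (Finset.image ν Finset.univ).powerset, ∑ T : Fin m → Finset (Sym (Fin n) k),
    if s.card + (colListM T).length = l then
      A s T (jetSec z x) * DeltaM z ν s T x
    else 0

end GMAE

namespace GMAE

/-! ### Partial derivatives of smooth functions and of the jet section -/

lemma contDiff_pd {n : ℕ} (i : Fin n) {f : (Fin n → ℝ) → ℝ} (hf : ContDiff ℝ (⊤ : ℕ∞) f) :
    ContDiff ℝ (⊤ : ℕ∞) (pd i f) :=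
  (hf.fderiv_right (m := (⊤ : ℕ∞)) (by simp)).clm_apply contDiff_const

lemma contDiff_pdList {n : ℕ} (L : List (Fin n)) {f : (Fin n → ℝ) → ℝ}
    (hf : ContDiff ℝ (⊤ : ℕ∞) f) : ContDiff ℝ (⊤ : ℕ∞) (pdList L f) := by
  induction L generalizing f with
  | nil => exact hf
  | cons i L ih => exact ih (contDiff_pd i hf)

/-- Schwarz's theorem. -/
lemma pd_comm {n : ℕ} (i j : Fin n) {f : (Fin n → ℝ) → ℝ} (hf : ContDiff ℝ (⊤ : ℕ∞) f) :
    pd i (pd j f) = pd j (pd i f) := by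
  have hd : Differentiable ℝ (fderiv ℝ f) :=
    (hf.fderiv_right (m := (⊤ : ℕ∞)) (by simp)).differentiable (by simp)
  have key : ∀ (a b : Fin n) (x : Fin n → ℝ),
      pd a (pd b f) x = fderiv ℝ (fderiv ℝ f) x (Pi.single a 1) (Pi.single b 1) := by
    intro a b x
    unfold pd
    rw [fderiv_clm_apply (hd x) (differentiableAt_const _)]
    simp
  funext x
  rw [key, key]
  exact (hf.contDiffAt.isSymmSndFDerivAt
    (by simpa using WithTop.coe_le_coe.2 (le_top : (2 : ℕ∞) ≤ ⊤))).eq _ _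

lemma pd_pdList {n : ℕ} (i : Fin n) (L : List (Fin n)) {f : (Fin n → ℝ) → ℝ}
    (hf : ContDiff ℝ (⊤ : ℕ∞) f) : pd i (pdList L f) = pdList L (pd i f) := by
  induction L generalizing f with
  | nil => rfl
  | cons j L ih =>
    change pd i (pdList L (pd j f)) = pdList L (pd j (pd i f))
    rw [ih (contDiff_pd j hf), pd_comm i j hf]

lemma differentiable_jetSec_apply {n m k : ℕ} {z : Fin m → (Fin n → ℝ) → ℝ}
    (hz : ∀ α, ContDiff ℝ (⊤ : ℕ∞) (z α)) (c : JIdx n m k) :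
    Differentiable ℝ fun x => jetSec (k := k) z x c := by
  rcases c with i | α | p
  · change Differentiable ℝ fun x : Fin n → ℝ => x i
    fun_prop
  · exact (hz α).differentiable (by simp)
  · exact (contDiff_pdList _ (hz p.1)).differentiable (by simp)

lemma fderiv_jetSec_apply {n m k : ℕ} {z : Fin m → (Fin n → ℝ) → ℝ}
    (hz : ∀ α, ContDiff ℝ (⊤ : ℕ∞) (z α)) (x v : Fin n → ℝ) (c : JIdx n m k) :
    fderiv ℝ (jetSec (k := k) z) x v c = fderiv ℝ (fun y => jetSec (k := k) z y c) x v := by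
  rw [fderiv_apply (differentiableAt_pi.2 fun c => differentiable_jetSec_apply hz c x) c]
  rfl

lemma dxF_fderiv_jetSec {n m k : ℕ} {z : Fin m → (Fin n → ℝ) → ℝ}
    (hz : ∀ α, ContDiff ℝ (⊤ : ℕ∞) (z α)) (x : Fin n → ℝ) (i j : Fin n) :
    dxF i (fderiv ℝ (jetSec (k := k) z) x (Pi.single j 1)) = if j = i then 1 else 0 := by
  change fderiv ℝ (jetSec (k := k) z) x (Pi.single j 1) (Sum.inl i) = _
  rw [fderiv_jetSec_apply hz]
  change fderiv ℝ (fun y : Fin n → ℝ => y i) x (Pi.single j 1) = _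
  rw [fderiv_apply differentiableAt_id i]
  simp [Pi.single_apply, eq_comm]

lemma dpF_fderiv_jetSec {n m k : ℕ} {z : Fin m → (Fin n → ℝ) → ℝ}
    (hz : ∀ α, ContDiff ℝ (⊤ : ℕ∞) (z α)) (hk : 0 < k) (x : Fin n → ℝ) (α : Fin m)
    (I : Sym (Fin n) k) (j : Fin n) :
    dpF α (topIdx hk I) (fderiv ℝ (jetSec (k := k) z) x (Pi.single j 1)) =
      pdM (I : Multiset (Fin n)) (pd j (z α)) x := by
  change fderiv ℝ (jetSec (k := k) z) x (Pi.single j 1) (Sum.inr (Sum.inr (α, topIdx hk I))) = _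
  rw [fderiv_jetSec_apply hz]
  exact congrFun (pd_pdList j _ (hz α)) x

/-! ### Determinants and splittings -/

lemma splitTuple_left {n l : ℕ} (ν : Fin l → Fin n) (s : Finset (Fin n)) (a : Fin l)
    (h : a.val < s.card) : splitTuple ν s a = s.orderEmbOfFin rfl ⟨a.val, h⟩ := by
  simp [splitTuple, h]

/-- The rearranged tuple enumerates the values of `ν` without repetition. -/
lemma splitTuple_spec {n l : ℕ} (ν : Fin l → Fin n) (hν : Function.Injective ν)
    (s : Finset (Fin n)) (hs : s ⊆ Finset.image ν Finset.univ) (b : Fin l) :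
    ∃ c, splitTuple ν s c = ν b ∧ ∀ c', splitTuple ν s c' = ν b → c' = c := by
  have hcard : (Finset.image ν Finset.univ).card = l := by
    rw [Finset.card_image_of_injective _ hν]; simp
  have hsub := Finset.card_sdiff_add_card_eq_card hs
  have hle : s.card ≤ l := by omega
  have hmem : ∀ c, splitTuple ν s c ∈ Finset.image ν Finset.univ := by
    intro c
    unfold splitTuple
    split_ifs with h1 h2
    · exact hs (Subtype.prop _)
    · exact (Finset.mem_sdiff.1 (Subtype.prop
        ((Finset.image ν Finset.univ \ s).orderIsoOfFin rfl ⟨c.val - s.card, h2⟩))).1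
    · simp
  have hinj : Function.Injective (splitTuple ν s) := by
    intro c d hcd
    by_cases hc : c.val < s.card <;> by_cases hd : d.val < s.card
    · simpa [splitTuple, hc, hd, Fin.ext_iff] using hcd
    · exfalso
      have h2 : d.val - s.card < (Finset.image ν Finset.univ \ s).card := by omega
      simp only [splitTuple, hc, hd, h2, dif_pos, dif_neg, not_false_eq_true] at hcd
      have := (Finset.mem_sdiff.1 (Subtype.prop
        ((Finset.image ν Finset.univ \ s).orderIsoOfFin rfl ⟨d.val - s.card, h2⟩))).2
      exact this (hcd ▸ Subtype.prop _)
    · exfalso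
      have h2 : c.val - s.card < (Finset.image ν Finset.univ \ s).card := by omega
      simp only [splitTuple, hc, hd, h2, dif_pos, dif_neg, not_false_eq_true] at hcd
      have := (Finset.mem_sdiff.1 (Subtype.prop
        ((Finset.image ν Finset.univ \ s).orderIsoOfFin rfl ⟨c.val - s.card, h2⟩))).2
      exact this (hcd ▸ Subtype.prop _)
    · have h2 : d.val - s.card < (Finset.image ν Finset.univ \ s).card := by omega
      have h3 : c.val - s.card < (Finset.image ν Finset.univ \ s).card := by omega
      simp only [splitTuple, hc, hd, h2, h3, dif_pos, dif_neg, not_false_eq_true,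
        Subtype.coe_inj, EmbeddingLike.apply_eq_iff_eq, Fin.mk.injEq] at hcd
      exact Fin.ext (by omega)
  have himg : Finset.image (splitTuple ν s) Finset.univ = Finset.image ν Finset.univ := by
    apply Finset.eq_of_subset_of_card_le
    · intro j hj
      obtain ⟨c, -, rfl⟩ := Finset.mem_image.1 hj
      exact hmem c
    · rw [hcard, Finset.card_image_of_injective _ hinj]; simp
  have hb : ν b ∈ Finset.image (splitTuple ν s) Finset.univ := by rw [himg]; simp
  obtain ⟨c, -, hc⟩ := Finset.mem_image.1 hb
  exact ⟨c, hc, fun c' h => hinj (h.trans hc.symm)⟩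

/-- Moving the rows (indexed by `b`) of `G a (ν b)` into the order `(i_1,…,i_{λ₀}, j_1,…,j_q)` costs the sign of
the splitting; when the first `λ₀` columns are those of `dx_{i_1},…,dx_{i_{λ₀}}`, the rearranged
matrix is block triangular with an identity block, so only the lower right minor survives. -/
lemma det_split {n l q : ℕ} (ν : Fin l → Fin n) (hν : Function.Injective ν)
    (s : Finset (Fin n)) (hs : s ⊆ Finset.image ν Finset.univ) (hl : s.card + q = l)
    (G : Fin l → Fin n → ℝ) (g : Fin q → Fin n → ℝ)
    (hG1 : ∀ (i : Fin s.card) (j : Fin n),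
      G (Fin.cast hl (Fin.castAdd q i)) j = if j = s.orderEmbOfFin rfl i then 1 else 0)
    (hG2 : ∀ (c : Fin q) (j : Fin n), G (Fin.cast hl (Fin.natAdd s.card c)) j = g c j) :
    Matrix.det (Matrix.of fun b a => G a (ν b)) =
      splitSign ν s * Matrix.det (Matrix.of fun r c : Fin q =>
        if h : r.val < (Finset.image ν Finset.univ \ s).card then
          g c ((Finset.image ν Finset.univ \ s).orderIsoOfFin rfl ⟨r.val, h⟩) else 0) := by
  subst hl
  have hcard : (Finset.image ν Finset.univ).card = s.card + q := by
    rw [Finset.card_image_of_injective _ hν]; simp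
  have hsub := Finset.card_sdiff_add_card_eq_card hs
  have hq : (Finset.image ν Finset.univ \ s).card = q := by omega
  have hright : ∀ c : Fin q, ∃ h : c.val < (Finset.image ν Finset.univ \ s).card,
      splitTuple ν s (Fin.natAdd s.card c) =
        (Finset.image ν Finset.univ \ s).orderIsoOfFin rfl ⟨c.val, h⟩ := by
    intro c
    refine ⟨by omega, ?_⟩
    simp [splitTuple, hq]
  have hfac : (Matrix.of fun b a => G a (ν b)) =
      (Matrix.of fun a b => if ν b = splitTuple ν s a then (1 : ℝ) else 0).transpose *
        (Matrix.of fun c a => G a (splitTuple ν s c)) := by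
    ext b a
    obtain ⟨c, hc, hu⟩ := splitTuple_spec ν hν s hs b
    rw [Matrix.mul_apply, Finset.sum_eq_single c]
    · simp [hc]
    · intro d _ hd
      have : ν b ≠ splitTuple ν s d := fun h => hd (hu d h.symm)
      simp [this]
    · simp
  rw [hfac, Matrix.det_mul, Matrix.det_transpose]
  unfold splitSign
  congr 1
  rw [← Matrix.det_submatrix_equiv_self (finSumFinEquiv (m := s.card) (n := q))]
  have hblk : (Matrix.of fun c a => G a (splitTuple ν s c)).submatrix
      (finSumFinEquiv (m := s.card) (n := q)) (finSumFinEquiv (m := s.card) (n := q)) =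
      Matrix.fromBlocks 1
        (Matrix.of fun (i : Fin s.card) (c : Fin q) => g c (s.orderEmbOfFin rfl i)) 0
        (Matrix.of fun r c : Fin q =>
          if h : r.val < (Finset.image ν Finset.univ \ s).card then
            g c ((Finset.image ν Finset.univ \ s).orderIsoOfFin rfl ⟨r.val, h⟩) else 0) := by
    have hL : ∀ i : Fin s.card, splitTuple ν s (Fin.castAdd q i) = s.orderEmbOfFin rfl i :=
      fun i => splitTuple_left ν s _ (by simp)
    ext r c
    rcases r with r | r <;> rcases c with c | c
    · have := hG1 c (s.orderEmbOfFin rfl r)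
      simp only [Fin.cast_refl, id] at this
      simp [hL, this, Matrix.one_apply]
    · have := hG2 c (s.orderEmbOfFin rfl r)
      simp only [Fin.cast_refl, id] at this
      simp [hL, this]
    · obtain ⟨h, hr⟩ := hright r
      have := hG1 c (splitTuple ν s (Fin.natAdd s.card r))
      simp only [Fin.cast_refl, id] at this
      simp only [Matrix.submatrix_apply, finSumFinEquiv_apply_right, finSumFinEquiv_apply_left,
        Matrix.of_apply, Matrix.fromBlocks_apply₂₁, Matrix.zero_apply, this]
      rw [if_neg]
      intro he
      rw [hr] at he
      have h3 := (Finset.mem_sdiff.1 (Subtype.prop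
        ((Finset.image ν Finset.univ \ s).orderIsoOfFin rfl ⟨r.val, h⟩))).2
      exact h3 (he ▸ Finset.orderEmbOfFin_mem _ _ _)
    · obtain ⟨h, hr⟩ := hright r
      have := hG2 c (splitTuple ν s (Fin.natAdd s.card r))
      simp only [Fin.cast_refl, id] at this
      simp only [Matrix.submatrix_apply, finSumFinEquiv_apply_right,
        Matrix.of_apply, Matrix.fromBlocks_apply₂₂, this, dif_pos h]
      rw [hr]
  rw [hblk, Matrix.det_fromBlocks_zero₂₁, Matrix.det_one, one_mul]

/-! ### Evaluation of the pulled-back form on the coordinate basis -/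

lemma formListM_eq {n m k : ℕ} [LinearOrder (Sym (Fin n) k)] (hk : 0 < k) (s : Finset (Fin n))
    (T : Fin m → Finset (Sym (Fin n) k)) :
    formListM hk s T = (s.sort (· ≤ ·)).map dxF ++
      (colListM T).map fun c => dpF c.1 (topIdx hk c.2) := by
  simp [formListM, colListM, List.map_flatMap, Function.comp_def]

lemma length_formListM {n m k : ℕ} [LinearOrder (Sym (Fin n) k)] (hk : 0 < k)
    (s : Finset (Fin n)) (T : Fin m → Finset (Sym (Fin n) k)) :
    (formListM hk s T).length = s.card + (colListM T).length := by
  simp [formListM_eq]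

lemma formListM_get_left {n m k : ℕ} [LinearOrder (Sym (Fin n) k)] (hk : 0 < k)
    (s : Finset (Fin n)) (T : Fin m → Finset (Sym (Fin n) k))
    (a : Fin (formListM hk s T).length) (h : a.val < s.card) :
    (formListM hk s T).get a = dxF (s.orderEmbOfFin rfl ⟨a.val, h⟩) := by
  have := formListM_eq hk s T
  simp only [List.get_eq_getElem, this, Finset.orderEmbOfFin_apply]
  rw [List.getElem_append_left (by simpa using h)]
  simp

lemma formListM_get_right {n m k : ℕ} [LinearOrder (Sym (Fin n) k)] (hk : 0 < k)
    (s : Finset (Fin n)) (T : Fin m → Finset (Sym (Fin n) k))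
    (a : Fin (formListM hk s T).length) (c : Fin (colListM T).length)
    (h : a.val = s.card + c.val) :
    (formListM hk s T).get a =
      dpF ((colListM T).get c).1 (topIdx hk ((colListM T).get c).2) := by
  have := formListM_eq hk s T
  simp only [List.get_eq_getElem, this, h]
  rw [List.getElem_append_right (by simp)]
  simp

/-- The pullback of one monomial of `Ψ`, evaluated on `(e_{ν_1},…,e_{ν_l})`: it is `Δ` when the
`i`'s form part of a splitting of the `ν`'s, and zero otherwise. -/
lemma wedge_fderiv_jetSec {n m k l : ℕ} [LinearOrder (Sym (Fin n) k)] (hk : 0 < k)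
    {z : Fin m → (Fin n → ℝ) → ℝ} (hz : ∀ α, ContDiff ℝ (⊤ : ℕ∞) (z α))
    (ν : Fin l → Fin n) (hν : Function.Injective ν) (x : Fin n → ℝ)
    (s : Finset (Fin n)) (T : Fin m → Finset (Sym (Fin n) k))
    (h : (formListM hk s T).length = l) :
    wedge (fun a => (formListM hk s T).get (Fin.cast h.symm a))
      (fun b => fderiv ℝ (jetSec (k := k) z) x (Pi.single (ν b) 1)) =
      if s ⊆ Finset.image ν Finset.univ then DeltaM z ν s T x else 0 := by
  have hl : s.card + (colListM T).length = l := by rw [← length_formListM hk, h]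
  change Matrix.det (Matrix.of fun b a => (formListM hk s T).get (Fin.cast h.symm a)
    (fderiv ℝ (jetSec (k := k) z) x (Pi.single (ν b) 1))) = _
  have hG1 : ∀ (i : Fin s.card) (j : Fin n),
      (formListM hk s T).get (Fin.cast h.symm (Fin.cast hl (Fin.castAdd _ i)))
        (fderiv ℝ (jetSec (k := k) z) x (Pi.single j 1)) =
        if j = s.orderEmbOfFin rfl i then 1 else 0 := by
    intro i j
    rw [formListM_get_left hk s T _ (by simp), dxF_fderiv_jetSec hz]
    rfl
  split_ifs with hs
  · refine det_split ν hν s hs hl (fun a j => (formListM hk s T).get (Fin.cast h.symm a)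
      (fderiv ℝ (jetSec (k := k) z) x (Pi.single j 1))) (fun c j =>
      pdM ((((colListM T).get c).2 : Sym (Fin n) k) : Multiset (Fin n))
        (pd j (z ((colListM T).get c).1)) x) hG1 ?_
    · intro c j
      rw [formListM_get_right hk s T _ c (by simp), dpF_fderiv_jetSec hz]
  -- a factor `dx_i` with `i` not among the `ν`'s kills every `e_{ν_b}`
  · obtain ⟨i, hi, hiν⟩ := Finset.not_subset.1 hs
    obtain ⟨a, ha⟩ : ∃ a, s.orderEmbOfFin rfl a = i := by
      have : i ∈ Set.range (s.orderEmbOfFin rfl) := by simpa using hi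
      exact this
    apply Matrix.det_eq_zero_of_column_eq_zero (Fin.cast hl (Fin.castAdd _ a))
    intro b
    refine (hG1 a (ν b)).trans (if_neg ?_)
    rintro hb
    exact hiν (by rw [← ha, ← hb]; simp)

lemma alternatingMap_sum_apply {E ι κ : Type*} [AddCommGroup E] [Module ℝ E] (S : Finset κ)
    (f : κ → E [⋀^ι]→ₗ[ℝ] ℝ) (v : ι → E) : (∑ c ∈ S, f c) v = ∑ c ∈ S, f c v := by
  classical
  induction S using Finset.induction_on with
  | empty => simp
  | insert a S ha ih => rw [Finset.sum_insert ha, Finset.sum_insert ha, AlternatingMap.add_apply, ih]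

/-- The left-hand sides of the Monge–Ampère equations are the coefficients of the pulled-back form
in the coordinate basis. -/
lemma pullback_PsiM_basis {n m k l : ℕ} [LinearOrder (Sym (Fin n) k)] (hk : 0 < k)
    (A : Finset (Fin n) → (Fin m → Finset (Sym (Fin n) k)) → Jet n m k → ℝ)
    {z : Fin m → (Fin n → ℝ) → ℝ} (hz : ∀ α, ContDiff ℝ (⊤ : ℕ∞) (z α))
    (ν : Fin l → Fin n) (hν : Function.Injective ν) (x : Fin n → ℝ) :
    pullback (jetSec (k := k) z) (PsiM hk A l) x (fun b => Pi.single (ν b) 1) =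
      gmaeLHSM A z ν x := by
  change PsiM hk A l (jetSec z x)
    (fun b => fderiv ℝ (jetSec (k := k) z) x (Pi.single (ν b) 1)) = _
  unfold PsiM gmaeLHSM
  rw [alternatingMap_sum_apply]
  rw [← Finset.sum_subset (Finset.subset_univ (Finset.image ν Finset.univ).powerset)]
  · refine Finset.sum_congr rfl fun s hs => ?_
    rw [alternatingMap_sum_apply]
    refine Finset.sum_congr rfl fun T _ => ?_
    by_cases h : (formListM hk s T).length = l
    · rw [dif_pos h, if_pos (by rw [← length_formListM hk, h]), AlternatingMap.smul_apply,
        wedge_fderiv_jetSec hk hz ν hν x s T h, if_pos (Finset.mem_powerset.1 hs), smul_eq_mul]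
    · rw [dif_neg h, if_neg (by rwa [← length_formListM hk]), AlternatingMap.zero_apply]
  · intro s _ hs
    rw [alternatingMap_sum_apply]
    refine Finset.sum_eq_zero fun T _ => ?_
    by_cases h : (formListM hk s T).length = l
    · rw [dif_pos h, AlternatingMap.smul_apply, wedge_fderiv_jetSec hk hz ν hν x s T h,
        if_neg (fun hsub => hs (Finset.mem_powerset.2 hsub)), smul_zero]
    · rw [dif_neg h, AlternatingMap.zero_apply]

lemma alternating_eq_zero_of_strictMono {n l : ℕ} (f : (Fin n → ℝ) [⋀^Fin l]→ₗ[ℝ] ℝ)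
    (hf : ∀ ν : Fin l → Fin n, StrictMono ν → f (fun b => Pi.single (ν b) 1) = 0) : f = 0 := by
  refine Module.Basis.ext_alternating (Pi.basisFun ℝ (Fin n)) fun v hv => ?_
  have hmono : StrictMono (v ∘ Tuple.sort v) :=
    (Tuple.monotone_sort v).strictMono_of_injective (hv.comp (Tuple.sort v).injective)
  have h0 := hf _ hmono
  have h1 := f.map_perm (fun b => (Pi.single (v b) 1 : Fin n → ℝ)) (Tuple.sort v)
  have h2 : f ((fun b => (Pi.single (v b) 1 : Fin n → ℝ)) ∘ Tuple.sort v) = 0 := h0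
  rw [h2] at h1
  simpa [Pi.basisFun_apply] using (smul_eq_zero_iff_eq _).1 h1.symm

/-- For forms `Ψ_1,…,Ψ_r` on `J^k(n,m)`, `Ψ_μ` of degree `l_μ` and of the
coordinate shape `Σ A^{(μ)} dx's ∧ dp's`, the pullbacks of all the `Ψ_μ` along the `k`-jet
section of `(z^1,…,z^m)` vanish identically iff `(z^1,…,z^m)` solves the system of
generalized Monge–Ampère equations `Σ A^{(μ)}·Δ = 0` for all `μ` and all
`1 ≤ ν_1 < … < ν_{l_μ} ≤ n`. -/
theorem statement6 (n m k r : ℕ) (hn : 1 ≤ n) (hm : 1 ≤ m) (hk : 1 ≤ k) (hr : 1 ≤ r)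
    (l : Fin r → ℕ) (hl1 : ∀ μ, 1 ≤ l μ) (hln : ∀ μ, l μ ≤ n)
    [LinearOrder (Sym (Fin n) k)]
    (A : Fin r → Finset (Fin n) → (Fin m → Finset (Sym (Fin n) k)) → Jet n m k → ℝ)
    (hA : ∀ μ s T, ContDiff ℝ (⊤ : ℕ∞) (A μ s T))
    (z : Fin m → (Fin n → ℝ) → ℝ) (hz : ∀ α, ContDiff ℝ (⊤ : ℕ∞) (z α)) :
    (∀ (μ : Fin r) (x : Fin n → ℝ) (v : Fin (l μ) → (Fin n → ℝ)),
        pullback (jetSec (k := k) z) (PsiM hk (A μ) (l μ)) x v = 0)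
    ↔ (∀ (μ : Fin r) (ν : Fin (l μ) → Fin n), StrictMono ν → ∀ x : Fin n → ℝ,
        gmaeLHSM (A μ) z ν x = 0) := by
  constructor
  · intro h μ ν hν x
    rw [← pullback_PsiM_basis hk (A μ) hz ν hν.injective x]
    exact h μ x _
  · intro h μ x v
    rw [alternating_eq_zero_of_strictMono (pullback (jetSec (k := k) z) (PsiM hk (A μ) (l μ)) x)
      fun ν hν => (pullback_PsiM_basis hk (A μ) hz ν hν.injective x).trans (h μ ν hν x)]
    rfl

end GMAE
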